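/- Let s be an integer greater than 27, and let A_s^{(2)} be the set of nonzero integers r such that s/r is a 2-step relation number. Then the lower density of A_s^{(2)} satisfies liminf_{N→∞} #(A_s^{(2)} ∩ [1,N])/N ≥ 1 − (1 − 11/s) · ∏_{n=1}^∞ (1 − 4/s^{2^n − 1}). -/

import Mathlib

/-- `a = [[1,0],[1,1]]` as an element of `SL(2, ℂ)`. -/
def matA : Matrix.SpecialLinearGroup (Fin 2) ℂ :=
  ⟨!![1, 0; 1, 1], by simp [Matrix.det_fin_two_of]⟩

/-- `b_q = [[1,q],[0,1]]` as an element of `SL(2, ℂ)`. -/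
def matB (q : ℂ) : Matrix.SpecialLinearGroup (Fin 2) ℂ :=
  ⟨!![1, q; 0, 1], by simp [Matrix.det_fin_two_of]⟩

/-- `q` is a relation number: the homomorphism `F₂ → SL(2,ℂ)`, `x ↦ a`, `y ↦ b_q`,
is not injective. -/
def IsRelationNumber (q : ℂ) : Prop :=
  ¬ Function.Injective
    (FreeGroup.lift (fun i : Bool => if i then matA else matB q) :
      FreeGroup Bool →* Matrix.SpecialLinearGroup (Fin 2) ℂ)

/-- `q` is an `ℓ`-step relation number: there are `k ≤ ℓ` and nonzero integers
`m_1, …, m_{2k+1}` with `b_q^{m_1} a^{m_2} ⋯ b_q^{m_{2k+1}}` lower triangular. -/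
def IsStepRelationNumber (ℓ : ℕ) (q : ℂ) : Prop :=
  ∃ k : ℕ, k ≤ ℓ ∧ ∃ m : Fin (2 * k + 1) → ℤ, (∀ i, m i ≠ 0) ∧
    ((List.ofFn (fun i : Fin (2 * k + 1) =>
      (if (i : ℕ) % 2 = 0 then matB q else matA) ^ (m i))).prod).val 0 1 = 0

/-- The residue class `w + smℤ` is `s`-good with good representative `w`. -/
def IsGoodRep (s w m : ℤ) : Prop :=
  ∃ y : ℤ, y * (Int.gcd w (s * m) : ℤ) ∣ m * (Int.gcd w s : ℤ) ∧
    (w ∣ s * m * y + (Int.gcd w (s * m) : ℤ) ∨ w ∣ s * m * y - (Int.gcd w (s * m) : ℤ))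

lemma matB_zpow (q : ℂ) (n : ℤ) : (matB q ^ n).val = !![1, n * q; 0, 1] := by
  induction n using Int.induction_on with
  | zero => simp [Matrix.one_fin_two]
  | succ n ih =>
    rw [zpow_add_one, Matrix.SpecialLinearGroup.coe_mul, ih]
    simp [matB]; ring
  | pred n ih =>
    rw [zpow_sub_one, Matrix.SpecialLinearGroup.coe_mul, ih, Matrix.SpecialLinearGroup.coe_inv]
    simp [matB, Matrix.adjugate_fin_two]; ring

lemma matA_zpow (n : ℤ) : (matA ^ n).val = !![1, 0; (n : ℂ), 1] := by
  induction n using Int.induction_on with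
  | zero => simp [Matrix.one_fin_two]
  | succ n ih =>
    rw [zpow_add_one, Matrix.SpecialLinearGroup.coe_mul, ih]
    simp [matA]
  | pred n ih =>
    rw [zpow_sub_one, Matrix.SpecialLinearGroup.coe_mul, ih, Matrix.SpecialLinearGroup.coe_inv]
    simp [matA, Matrix.adjugate_fin_two]; ring

lemma step_of_dvd (s j k : ℤ) (hj : j ≠ 0) (hk : k ≠ 0) (hv : 1 + s * j ≠ 0) :
    IsStepRelationNumber 2 ((s : ℂ) / (((1 + s * j) * k : ℤ) : ℂ)) := by
  refine ⟨1, by norm_num, ![1, -(j * k), -(1 + s * j)], ?_, ?_⟩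
  · intro i
    fin_cases i
    · simp
    · simp [hj, hk]
    · exact neg_ne_zero.2 hv
  · have hk' : (k : ℂ) ≠ 0 := by exact_mod_cast hk
    have hv' : (1 + s * j : ℂ) ≠ 0 := by exact_mod_cast hv
    simp only [List.ofFn_succ, List.ofFn_zero, List.prod_cons, List.prod_nil, mul_one,
      Matrix.SpecialLinearGroup.coe_mul]
    simp [matB_zpow, matA_zpow, -zpow_neg, -neg_add_rev]
    simp [matB]
    field_simp
    ring

lemma chain_pigeon (s : ℕ) (hs : 0 < s) (l : List ℕ) (hl : l.length = s)
    (hp : ∀ p ∈ l, p.Prime ∧ s < p) :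
    ∃ v, 1 < v ∧ v ∣ l.prod ∧ v ≡ 1 [MOD s] := by
  have : NeZero s := ⟨hs.ne'⟩
  obtain ⟨x, y, hxy, he⟩ := Fintype.exists_ne_map_eq_of_card_lt
    (fun i : Fin (s + 1) => (((l.take i).prod : ℕ) : ZMod s)) (by simp [ZMod.card])
  wlog hlt : x < y generalizing x y
  · exact this y x hxy.symm he.symm (lt_of_le_of_ne (not_lt.1 hlt) hxy.symm)
  have hlt' : (x : ℕ) < y := hlt
  have hy := y.2
  have hdec : (l.take y).prod = (l.take x).prod * ((l.take y).drop x).prod := by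
    conv_lhs => rw [← List.take_append_drop x (l.take y)]
    rw [List.prod_append, List.take_take, min_eq_left hlt'.le]
  have hmem : ∀ p ∈ (l.take y).drop x, p ∈ l := fun p h =>
    List.mem_of_mem_take (List.mem_of_mem_drop h)
  refine ⟨((l.take y).drop x).prod, ?_, ?_, ?_⟩
  · have hne : (l.take y).drop x ≠ [] := by
      intro h
      have := congrArg List.length h
      simp at this
      omega
    obtain ⟨a, t, hat⟩ := List.exists_cons_of_ne_nil hne
    rw [hat, List.prod_cons]
    have ha : a ∈ l := hmem a (by simp [hat])
    have ht : 0 < t.prod := List.prod_pos fun p h =>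
      (hp p (hmem p (by simp [hat, h]))).1.pos
    have := (hp a ha).1.two_le
    nlinarith
  · refine (Dvd.intro_left _ hdec.symm).trans ?_
    conv_rhs => rw [← List.take_append_drop y l, List.prod_append]
    exact Dvd.intro _ rfl
  · have hc : Nat.Coprime s (l.take x).prod := by
      refine Nat.coprime_list_prod_right_iff.2 fun p h => ?_
      have := hp p (List.mem_of_mem_take h)
      exact ((this.1.coprime_iff_not_dvd).2 (Nat.not_dvd_of_pos_of_lt hs this.2)).symm
    have h2 : (l.take x).prod * ((l.take y).drop x).prod ≡ (l.take x).prod * 1 [MOD s] := by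
      rw [← hdec, mul_one]
      exact ((ZMod.natCast_eq_natCast_iff _ _ _).1 he).symm
    exact Nat.ModEq.cancel_left_of_coprime hc h2

lemma exists_block (B : ℕ) (ε : ℝ) (hε : 0 < ε) :
    ∃ P : Finset ℕ, (∀ p ∈ P, p.Prime ∧ B < p) ∧ ∏ p ∈ P, (1 - 1 / (p : ℝ)) < ε := by
  have h := not_summable_one_div_on_primes
  rw [not_summable_iff_tendsto_nat_atTop_of_nonneg] at h
  swap
  · intro n; exact Set.indicator_nonneg (fun _ _ => by positivity) _
  set f : ℕ → ℝ := Set.indicator {p | Nat.Prime p} (fun n : ℕ => (1 : ℝ) / n) with hf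
  obtain ⟨n, hn, hB⟩ := ((h.eventually_gt_atTop
    ((∑ i ∈ Finset.range (B + 1), f i) - Real.log ε)).and
    (Filter.eventually_ge_atTop (B + 1))).exists
  refine ⟨(Finset.Ico (B + 1) n).filter Nat.Prime, ?_, ?_⟩
  · intro p hp
    simp at hp
    exact ⟨hp.2, by omega⟩
  have hsum : ∑ p ∈ (Finset.Ico (B + 1) n).filter Nat.Prime, (1 / (p : ℝ)) > - Real.log ε := by
    rw [Finset.sum_filter]
    have : ∑ p ∈ Finset.Ico (B + 1) n, f p = ∑ a ∈ Finset.Ico (B + 1) n, if Nat.Prime a then 1 / (a:ℝ) else 0 := by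
      refine Finset.sum_congr rfl fun p _ => ?_
      simp [hf, Set.indicator_apply]
    rw [← this, Finset.sum_Ico_eq_sub _ hB]
    linarith
  calc _ ≤ ∏ p ∈ (Finset.Ico (B + 1) n).filter Nat.Prime, Real.exp (-(1 / (p : ℝ))) := by
        refine Finset.prod_le_prod ?_ ?_
        · intro p hp
          simp only [Finset.mem_filter] at hp
          have : (1:ℝ) ≤ p := by exact_mod_cast hp.2.one_le
          rw [sub_nonneg, div_le_one (by linarith)]
          exact this
        · intro p hp
          have := Real.add_one_le_exp (-(1 / (p : ℝ)))
          linarith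
    _ = Real.exp (-∑ p ∈ (Finset.Ico (B + 1) n).filter Nat.Prime, (1 / (p : ℝ))) := by
        rw [← Real.exp_sum, Finset.sum_neg_distrib]
    _ < Real.exp (Real.log ε) := Real.exp_lt_exp.2 (by linarith)
    _ = ε := Real.exp_log hε

lemma totient_block (P : Finset ℕ) (hP : ∀ p ∈ P, p.Prime) :
    ((Nat.totient (∏ p ∈ P, p) : ℕ) : ℝ) = (∏ p ∈ P, p : ℕ) * ∏ p ∈ P, (1 - 1 / (p : ℝ)) := by
  have h := Nat.totient_eq_mul_prod_factors (∏ p ∈ P, p)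
  rw [Nat.primeFactors_prod hP] at h
  have := congrArg (fun x : ℚ => (x : ℝ)) h
  push_cast at this
  simpa using this

open Classical in
lemma sieve (P : Finset ℕ) (hP : ∀ p ∈ P, p.Prime) (ε : ℝ) 
    (h : ∏ p ∈ P, (1 - 1 / (p : ℝ)) < ε) :
    ∀ᶠ N : ℕ in Filter.atTop,
      (((Finset.Icc 1 N).filter (fun r => ∀ p ∈ P, ¬ p ∣ r)).card : ℝ) ≤ ε * N := by
  set Q := ∏ p ∈ P, p with hQ
  set c := ∏ p ∈ P, (1 - 1 / (p : ℝ)) with hc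
  have hQpos : 0 < Q := Finset.prod_pos fun p hp => (hP p hp).pos
  have ht := totient_block P hP
  rw [← hQ, ← hc] at ht
  obtain ⟨M, hM⟩ := exists_nat_ge ((Nat.totient Q : ℝ) / (ε - c))
  filter_upwards [Filter.eventually_ge_atTop M] with N hN
  have h1 := Nat.Ico_filter_coprime_le 1 N hQpos.ne'
  have hsub : (Finset.Icc 1 N).filter (fun r => ∀ p ∈ P, ¬ p ∣ r) ⊆
      (Finset.Ico 1 (1 + N)).filter (Nat.Coprime Q) := by
    intro r hr
    simp only [Finset.mem_filter, Finset.mem_Icc, Finset.mem_Ico] at hr ⊢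
    refine ⟨⟨hr.1.1, by omega⟩, Nat.Coprime.prod_left fun p hp => ?_⟩
    exact ((hP p hp).coprime_iff_not_dvd).2 (hr.2 p hp)
  have h2 : (((Finset.Icc 1 N).filter (fun r => ∀ p ∈ P, ¬ p ∣ r)).card : ℝ) ≤
      Nat.totient Q * ((N / Q : ℕ) + 1) := by
    exact_mod_cast (Finset.card_le_card hsub).trans h1
  have h3 : ((N / Q : ℕ) : ℝ) ≤ (N : ℝ) / Q := Nat.cast_div_le
  have h4 : (Nat.totient Q : ℝ) ≤ (ε - c) * N := by
    have : (Nat.totient Q : ℝ) / (ε - c) ≤ N := hM.trans (by exact_mod_cast hN)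
    rw [div_le_iff₀ (by linarith)] at this
    linarith
  have hQ' : (0:ℝ) < Q := by exact_mod_cast hQpos
  have h5 : (Nat.totient Q : ℝ) * ((N / Q : ℕ) : ℝ) ≤ c * N := by
    calc (Nat.totient Q : ℝ) * ((N / Q : ℕ) : ℝ) ≤ Nat.totient Q * ((N : ℝ) / Q) := by gcongr
      _ = c * N := by rw [ht]; field_simp
  linarith

def HasChain (K B r : ℕ) : Prop :=
  ∃ l : List ℕ, l.length = K ∧ (∀ p ∈ l, p.Prime ∧ B < p) ∧ l.prod ∣ r

open Classical in
lemma chain_density (K : ℕ) : ∀ (B : ℕ) (ε : ℝ), 0 < ε →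
    ∀ᶠ N : ℕ in Filter.atTop,
      (((Finset.Icc 1 N).filter (fun r => ¬ HasChain K B r)).card : ℝ) ≤ ε * N := by
  induction K with
  | zero =>
    intro B ε hε
    refine Filter.Eventually.of_forall fun N => ?_
    have : (Finset.Icc 1 N).filter (fun r => ¬ HasChain 0 B r) = ∅ := by
      refine Finset.filter_eq_empty_iff.2 fun r _ h => h ⟨[], by simp⟩
    rw [this]
    simp
    positivity
  | succ K ih =>
    intro B ε hε
    obtain ⟨P, hP, hPε⟩ := exists_block B (ε / 2) (by linarith)
    filter_upwards [ih (max B (P.sup id)) (ε / 2) (by linarith),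
      sieve P (fun p hp => (hP p hp).1) _ hPε] with N h1 h2
    have hsub : (Finset.Icc 1 N).filter (fun r => ¬ HasChain (K + 1) B r) ⊆
        (Finset.Icc 1 N).filter (fun r => ¬ HasChain K (max B (P.sup id)) r) ∪
        (Finset.Icc 1 N).filter (fun r => ∀ p ∈ P, ¬ p ∣ r) := by
      intro r hr
      simp only [Finset.mem_filter, Finset.mem_union] at hr ⊢
      by_contra hcon
      push Not at hcon
      obtain ⟨l, hl, hlp, hld⟩ := hcon.1 hr.1
      obtain ⟨p, hpP, hpr⟩ := hcon.2 hr.1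
      have hpB : p ≤ P.sup id := Finset.le_sup (f := id) hpP
      refine hr.2 ⟨p :: l, by simp [hl], ?_, ?_⟩
      · intro x hx
        rcases List.mem_cons.1 hx with rfl | hx
        · exact hP _ hpP
        · exact ⟨(hlp x hx).1, lt_of_le_of_lt (le_max_left _ _) (hlp x hx).2⟩
      · rw [List.prod_cons]
        refine Nat.Coprime.mul_dvd_of_dvd_of_dvd ?_ hpr hld
        refine Nat.coprime_list_prod_right_iff.2 fun x hx => ?_
        refine (Nat.coprime_primes (hP p hpP).1 (hlp x hx).1).2 ?_
        have := (hlp x hx).2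
        have := le_max_right B (P.sup id)
        omega
    have h3 := (Finset.card_le_card hsub).trans (Finset.card_union_le _ _)
    have h4 : (((Finset.Icc 1 N).filter (fun r => ¬ HasChain (K + 1) B r)).card : ℝ) ≤ 
      (((Finset.Icc 1 N).filter (fun r => ¬ HasChain K (max B (P.sup id)) r)).card : ℝ) +
      (((Finset.Icc 1 N).filter (fun r => ∀ p ∈ P, ¬ p ∣ r)).card : ℝ) := by exact_mod_cast h3
    linarith

lemma step_of_chain (s r : ℕ) (hs : 0 < s) (hr : 0 < r) (h : HasChain s s r) :
    IsStepRelationNumber 2 ((s : ℂ) / (r : ℂ)) := by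
  obtain ⟨l, hl, hp, hd⟩ := h
  obtain ⟨v, hv1, hv, hmod⟩ := chain_pigeon s hs l hl hp
  obtain ⟨k, rfl⟩ := hv.trans hd
  obtain ⟨j, hj⟩ := (Nat.modEq_iff_dvd' hv1.le).1 hmod.symm
  have hv' : v = 1 + s * j := by omega
  have hj0 : j ≠ 0 := by rintro rfl; simp at hv'; omega
  have hk0 : k ≠ 0 := by rintro rfl; simp at hr
  have := step_of_dvd s j k (by exact_mod_cast hj0) (by exact_mod_cast hk0) (by positivity)
  rw [hv']
  push_cast at this ⊢
  exact this

lemma my_tprod_nonneg (f : ℕ → ℝ) (hf : ∀ n, 0 ≤ f n) : 0 ≤ ∏' n, f n := by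
  by_cases h : Multipliable f
  · exact ge_of_tendsto' h.hasProd fun S => Finset.prod_nonneg fun i _ => hf i
  · rw [tprod_eq_one_of_not_multipliable h]; norm_num

theorem stmt3 (s : ℤ) (hs : 27 < s) :
    1 - (1 - 11 / (s : ℝ)) * (∏' n : ℕ, (1 - 4 / (s : ℝ) ^ (2 ^ (n + 1) - 1))) ≤
      Filter.liminf
        (fun N : ℕ =>
          (({r : ℤ | r ≠ 0 ∧ IsStepRelationNumber 2 ((s : ℂ) / (r : ℂ))} ∩
              Set.Icc (1 : ℤ) (N : ℤ)).ncard : ℝ) / (N : ℝ))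
        Filter.atTop := by
  classical
  have hsR : (27 : ℝ) < s := by exact_mod_cast hs
  have hprod : 0 ≤ ∏' n : ℕ, (1 - 4 / (s : ℝ) ^ (2 ^ (n + 1) - 1)) := by
    refine my_tprod_nonneg _ fun n => ?_
    have h1 : (s : ℝ) ≤ (s : ℝ) ^ (2 ^ (n + 1) - 1) := by
      refine le_self_pow₀ (by linarith) ?_
      have : 2 ≤ 2 ^ (n + 1) := by rw [pow_succ]; have := Nat.one_le_two_pow (n := n); omega
      omega
    rw [sub_nonneg, div_le_one (by linarith)]
    linarith
  have h11 : 0 ≤ 1 - 11 / (s : ℝ) := by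
    rw [sub_nonneg, div_le_one (by linarith)]; linarith
  have hle1 : 1 - (1 - 11 / (s : ℝ)) * (∏' n : ℕ, (1 - 4 / (s : ℝ) ^ (2 ^ (n + 1) - 1))) ≤ 1 := by
    have := mul_nonneg h11 hprod
    linarith
  refine hle1.trans ?_
  obtain ⟨t, rfl⟩ := Int.eq_ofNat_of_zero_le (by omega : 0 ≤ s)
  have ht : 0 < t := by omega
  refine le_of_forall_pos_le_add fun ε hε => ?_
  rw [← sub_le_iff_le_add]
  have hfin : ∀ N : ℕ, ({r : ℤ | r ≠ 0 ∧ IsStepRelationNumber 2 (((t : ℤ) : ℂ) / (r : ℂ))} ∩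
              Set.Icc (1 : ℤ) (N : ℤ)).Finite := fun N => (Set.finite_Icc _ _).inter_of_right _
  refine Filter.le_liminf_of_le ?_ ?_
  · refine Filter.IsBoundedUnder.isCoboundedUnder_ge ⟨1, ?_⟩
    rw [Filter.eventually_map]
    refine Filter.Eventually.of_forall fun N => ?_
    refine div_le_one_of_le₀ ?_ (by positivity)
    have h := Set.ncard_le_ncard (Set.inter_subset_right :
      ({r : ℤ | r ≠ 0 ∧ IsStepRelationNumber 2 (((t : ℤ) : ℂ) / (r : ℂ))} ∩
              Set.Icc (1 : ℤ) (N : ℤ)) ⊆ _) (Set.finite_Icc _ _)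
    have h2 : (Set.Icc (1 : ℤ) (N : ℤ)).ncard = N := by
      rw [← Finset.coe_Icc, Set.ncard_coe_finset]; simp
    rw [h2] at h
    exact_mod_cast h
  · filter_upwards [chain_density t t ε hε, Filter.eventually_gt_atTop 0] with N hN hN0
    have hN0' : (0 : ℝ) < N := by exact_mod_cast hN0
    rw [le_div_iff₀ hN0']
    have hcard := Finset.card_filter_add_card_filter_not (s := Finset.Icc 1 N)
      (fun r => HasChain t t r)
    have hsub : ((((Finset.Icc 1 N).filter (fun r => HasChain t t r)).map
        ⟨fun n : ℕ => (n : ℤ), Nat.cast_injective⟩ : Finset ℤ) : Set ℤ) ⊆ 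
        ({r : ℤ | r ≠ 0 ∧ IsStepRelationNumber 2 (((t : ℤ) : ℂ) / (r : ℂ))} ∩
              Set.Icc (1 : ℤ) (N : ℤ)) := by
      intro x hx
      simp only [Finset.coe_map, Function.Embedding.coeFn_mk, Set.mem_image, Finset.mem_coe,
        Finset.mem_filter, Finset.mem_Icc] at hx
      obtain ⟨r, ⟨⟨h1, h2⟩, h3⟩, rfl⟩ := hx
      refine ⟨⟨by simp; omega, ?_⟩, by exact_mod_cast h1, by exact_mod_cast h2⟩
      have := step_of_chain t r ht h1 h3
      push_cast
      exact this
    have h := Set.ncard_le_ncard hsub (hfin N)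
    rw [Set.ncard_coe_finset, Finset.card_map] at h
    rw [Nat.card_Icc] at hcard
    have hcR : (((Finset.Icc 1 N).filter (fun r => HasChain t t r)).card : ℝ) +
      ((Finset.Icc 1 N).filter (fun r => ¬ HasChain t t r)).card = N := by
      exact_mod_cast hcard
    have hR : (((Finset.Icc 1 N).filter (fun r => HasChain t t r)).card : ℝ) ≤ 
      (({r : ℤ | r ≠ 0 ∧ IsStepRelationNumber 2 (((t : ℤ) : ℂ) / (r : ℂ))} ∩
              Set.Icc (1 : ℤ) (N : ℤ)).ncard : ℝ) := by exact_mod_cast h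
    linarith
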